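/- arXiv:1512.08602 — 2 statements merged into one kernel-verified Lean document; each statement's English description precedes it below -/
import Mathlib

section
/- There exists an absolute constant C > 0 with the following property. Let d, n be positive integers, p ≥ 2 a real number, and v₁, …, vₙ ∈ ℝ^d; let P be the convex hull of {v₁,…,vₙ}. Suppose u ∈ P satisfies {z : ‖z − u‖_p ≤ r} ⊆ P ⊆ {z : ‖z − u‖_p ≤ 1} for some r > 0, and let ε > 0 satisfy r ≥ 2ε. Then there exists x ∈ ℝ^n with x ≥ 0 coordinatewise, Σᵢ xᵢ = 1, at most C·(p/r²)·log(r/ε) nonzero coordinates, such that ‖Σ_{i ∈ supp(x)} xᵢ vᵢ − u‖_p ≤ ε. -/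
open Finset

/-- The ℓ_p norm of a finite-dimensional real vector, for real `p ≥ 1`. -/
noncomputable def lpNorm {ι : Type*} [Fintype ι] (p : ℝ) (x : ι → ℝ) : ℝ :=
  (∑ j, |x j| ^ p) ^ (1 / p)

/-! The squared `ℓ_p` norm, `p ≥ 2`, lies below its tangent at any point plus `(p - 1) ‖·‖_p²`.
Hence a Frank–Wolfe step towards the vertex minimising the tangent functional at the iterate `y`
shrinks `a = ‖y - u‖²`: as the polytope contains a ball of radius `r` around `u`, some vertex lies
at least `r` beyond `u`, in dual distance, and the step turns `a` into at most
`a - (r √a + a)² / (4 K R²)`. The `a²` term brings `a` down to `r²` in `O(K R² / r²)` steps; from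
there the `r² a` term contracts geometrically and reaches `ε²` in `O(K R² / r² · log (r / ε))` more
steps. Each step adds one vertex to the support. -/

section SparseHull

variable {E ι : Type*} [AddCommGroup E] [Module ℝ E] {v : ι → E} {k : ℕ} {y : E}

/-- The points that are convex combinations of at most `k` members of the family `v`; the index
set `ι` may be infinite. -/
def sparseHull (v : ι → E) (k : ℕ) : Set E :=
  {y | ∃ t : Finset ι, #t ≤ k ∧ y ∈ convexHull ℝ (v '' t)}

lemma sparseHull_subset_convexHull : sparseHull v k ⊆ convexHull ℝ (Set.range v) := by
  rintro y ⟨t, -, hy⟩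
  exact convexHull_mono (Set.image_subset_range v t) hy

lemma apply_mem_sparseHull_one (i : ι) : v i ∈ sparseHull v 1 :=
  ⟨{i}, by simp, by simp⟩

lemma add_smul_sub_mem_sparseHull_succ (hy : y ∈ sparseHull v k) (i : ι) {γ : ℝ}
    (hγ : γ ∈ Set.Icc (0 : ℝ) 1) : y + γ • (v i - y) ∈ sparseHull v (k + 1) := by
  classical
  obtain ⟨t, ht, hy⟩ := hy
  refine ⟨insert i t, (card_insert_le i t).trans (by lia), ?_⟩
  have hyt : y ∈ convexHull ℝ (v '' (insert i t : Finset ι)) :=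
    convexHull_mono (Set.image_mono (by simp)) hy
  have hit : v i ∈ convexHull ℝ (v '' (insert i t : Finset ι)) :=
    subset_convexHull ℝ _ (Set.mem_image_of_mem v (by simp))
  exact (convex_convexHull ℝ _).add_smul_sub_mem hyt hit hγ

lemma exists_stdSimplex_of_mem_sparseHull [Fintype ι] (hy : y ∈ sparseHull v k) :
    ∃ x ∈ stdSimplex ℝ ι, #{i | x i ≠ 0} ≤ k ∧ ∑ i, x i • v i = y := by
  classical
  obtain ⟨t, ht, hy⟩ := hy
  have himage : v '' t = Fintype.linearCombination ℝ v '' ((fun i => Pi.single i 1) '' t) := by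
    simp [Set.image_image]
  rw [himage, ← LinearMap.image_convexHull] at hy
  obtain ⟨x, hx, rfl⟩ := hy
  have hsupp : x ∈ {x : ι → ℝ | ∀ i ∉ t, x i = 0} := by
    refine convexHull_min ?_ ?_ hx
    · rintro _ ⟨j, hj, rfl⟩ i hi
      exact Pi.single_eq_of_ne (ne_of_mem_of_not_mem hj hi).symm _
    · intro x hx y hy a b _ _ _ i hi
      simp [hx i hi, hy i hi]
  refine ⟨x, ?_, (card_le_card fun i hi => ?_).trans ht, by simp [Fintype.linearCombination_apply]⟩
  · rw [← convexHull_basis_eq_stdSimplex]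
    refine convexHull_mono ?_ hx
    rintro _ ⟨i, -, rfl⟩
    exact ⟨i, by ext; simp [Pi.single_apply, eq_comm]⟩
  · by_contra hit
    simp [hsupp i hit] at hi

end SparseHull

section DescentSequence

variable {a : ℕ → ℝ} {M : ℝ}

lemma le_div_of_le_sub_sq_div (hM : 0 < M) (h0 : a 0 ≤ M / 2)
    (h : ∀ k, a (k + 1) ≤ a k - a k ^ 2 / M) (k : ℕ) : a k ≤ M / (k + 2) := by
  induction k with
  | zero => simpa using h0
  | succ k ih =>
    have hmono : a k - a k ^ 2 / M ≤ M / (k + 2) - (M / (k + 2)) ^ 2 / M := by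
      have hfactor : M / (k + 2) - (M / (k + 2)) ^ 2 / M - (a k - a k ^ 2 / M)
          = (M / (k + 2) - a k) * (M - M / (k + 2) - a k) / M := by field_simp; ring
      have hhalf : M / (k + 2) ≤ M / 2 := by gcongr; linarith [Nat.cast_nonneg (α := ℝ) k]
      have : 0 ≤ (M / (k + 2) - a k) * (M - M / (k + 2) - a k) / M :=
        div_nonneg (mul_nonneg (by linarith) (by linarith)) hM.le
      linarith
    calc a (k + 1) ≤ M / (k + 2) - (M / (k + 2)) ^ 2 / M := (h k).trans hmono
      _ = M * (k + 1) / (k + 2) ^ 2 := by field_simp; ring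
      _ ≤ M / ((k + 1 : ℕ) + 2) := by
        push_cast
        rw [div_le_div_iff₀ (by positivity) (by positivity), mul_assoc]
        gcongr
        nlinarith

lemma le_sq_of_two_phase_descent {r ε : ℝ} (hr : 0 < r) (hε : 0 < ε) (hM : 0 < M)
    (h0 : a 0 ≤ M / 2) (hnonneg : ∀ k, 0 ≤ a k) (hsub : ∀ k, a (k + 1) ≤ a k - a k ^ 2 / M)
    (hgeom : ∀ k, a (k + 1) ≤ (1 - r ^ 2 / M) * a k) {k l : ℕ} (hk : M / r ^ 2 ≤ k)
    (hl : 2 * M / r ^ 2 * Real.log (r / ε) ≤ l) : a (k + l) ≤ ε ^ 2 := by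
  have hphase₁ : a k ≤ r ^ 2 := by
    refine (le_div_of_le_sub_sq_div hM h0 hsub k).trans ?_
    rw [div_le_iff₀ (by positivity)] at hk ⊢
    nlinarith [sq_nonneg r]
  have hphase₂ : a (k + l) ≤ Real.exp (-(r ^ 2 / M)) ^ l * a k :=
    le_geom (u := fun m => a (k + m)) (Real.exp_nonneg _) l fun m _ =>
      (hgeom (k + m)).trans
        (mul_le_mul_of_nonneg_right (Real.one_sub_le_exp_neg _) (hnonneg _))
  have hexponent : l * -(r ^ 2 / M) ≤ (2 : ℕ) * Real.log (ε / r) := by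
    have : r ^ 2 / M * (2 * M / r ^ 2 * Real.log (r / ε)) ≤ r ^ 2 / M * l := by gcongr
    rw [← inv_div r ε, Real.log_inv]
    field_simp at this ⊢
    push_cast
    linarith
  have hexp : Real.exp (-(r ^ 2 / M)) ^ l ≤ (ε / r) ^ 2 := by
    rw [← Real.exp_nat_mul]
    refine (Real.exp_le_exp.2 hexponent).trans_eq ?_
    rw [Real.exp_nat_mul, Real.exp_log (by positivity)]
  calc a (k + l) ≤ (ε / r) ^ 2 * r ^ 2 :=
        hphase₂.trans (mul_le_mul hexp hphase₁ (hnonneg k) (sq_nonneg _))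
    _ = ε ^ 2 := by field_simp

lemma ceil_add_ceil_add_one_le {X L : ℝ} (hX : 1 ≤ X) (hL : Real.log 2 ≤ L) :
    ((⌈4 * X⌉₊ + ⌈8 * X * L⌉₊ + 1 : ℕ) : ℝ) ≤ 20 * X * L := by
  have hL' : 0.69 ≤ L := by linarith [Real.log_two_gt_d9]
  have h4 := Nat.ceil_lt_add_one (show 0 ≤ 4 * X by positivity)
  have h8 := Nat.ceil_lt_add_one (show 0 ≤ 8 * X * L by positivity)
  push_cast
  nlinarith

end DescentSequence

section FrankWolfe

variable {E ι : Type*} [AddCommGroup E] [Module ℝ E] {N : Seminorm ℝ E} {K r R ε : ℝ}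
  {v : ι → E} {u y : E}

/-- `N` is 2-uniformly smooth with constant `K`: the function `N ^ 2` has at every `z` a linear
functional `2 g` as gradient, with quadratic error at most `K * N h ^ 2`. The normalisation
`g z = N z ^ 2` is Euler's relation for the 2-homogeneous function `N ^ 2`. -/
def IsTwoSmooth (N : Seminorm ℝ E) (K : ℝ) : Prop :=
  ∀ z, ∃ g : E →ₗ[ℝ] ℝ, g z = N z ^ 2 ∧
    ∀ h, N (z + h) ^ 2 ≤ N z ^ 2 + 2 * g h + K * N h ^ 2

lemma IsTwoSmooth.one_le (hN : IsTwoSmooth N K) {w : E} (hw : N w ≠ 0) : 1 ≤ K := by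
  obtain ⟨g, hg, hsmooth⟩ := hN w
  have hdouble : N (w + w) = 2 * N w := by
    rw [← two_smul ℝ w, map_smul_eq_mul, Real.norm_two]
  have := hsmooth w
  rw [hg, hdouble] at this
  exact le_of_mul_le_mul_right (by linarith) (sq_pos_of_ne_zero hw)

lemma le_of_closedBall_subset_closedBall (hr : 0 ≤ r) {w : E} (hw : N w ≠ 0)
    (h : N.closedBall u r ⊆ N.closedBall u R) : r ≤ R := by
  have hnorm : N (u + (r / N w) • w - u) = r := by
    rw [add_sub_cancel_left, map_smul_eq_mul, Real.norm_of_nonneg (by positivity),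
      div_mul_cancel₀ r hw]
  simpa only [Seminorm.mem_closedBall, hnorm] using h (N.mem_closedBall.2 hnorm.le)

/-- When `N z = 0` the quotient is `0` and the bound is the one given by `u` itself. -/
lemma exists_apply_sub_le_of_closedBall_subset (hr : 0 ≤ r)
    (hin : N.closedBall u r ⊆ convexHull ℝ (Set.range v)) (g : E →ₗ[ℝ] ℝ) (z : E) :
    ∃ i, g (v i - u) ≤ -(r / N z * g z) := by
  have hmem : u - (r / N z) • z ∈ convexHull ℝ (Set.range v) := by
    refine hin (N.mem_closedBall.2 ?_)
    rw [sub_sub_cancel_left, map_neg_eq_map, map_smul_eq_mul,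
      Real.norm_of_nonneg (by positivity)]
    rw [div_mul_eq_mul_div, mul_div_assoc]
    exact mul_le_of_le_one_right hr (div_self_le_one _)
  obtain ⟨_, ⟨i, rfl⟩, hi⟩ :=
    (g.concaveOn (convex_convexHull ℝ _)).exists_le_of_mem_convexHull
      (subset_convexHull ℝ (Set.range v)) hmem
  exact ⟨i, by simp only [map_sub, map_smul, smul_eq_mul] at hi ⊢; linarith⟩

lemma exists_apply_sub_le_of_apply_eq_sq (hr : 0 ≤ r)
    (hin : N.closedBall u r ⊆ convexHull ℝ (Set.range v)) {g : E →ₗ[ℝ] ℝ}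
    (hg : g (y - u) = N (y - u) ^ 2) :
    ∃ i, g (v i - y) ≤ -(r * N (y - u) + N (y - u) ^ 2) := by
  obtain ⟨i, hi⟩ := exists_apply_sub_le_of_closedBall_subset hr hin g (y - u)
  have hcancel : r / N (y - u) * N (y - u) ^ 2 = r * N (y - u) := by
    rw [sq, ← mul_assoc, div_mul_eq_mul_div, mul_div_assoc, mul_assoc, div_self_mul_self]
  rw [hg, hcancel] at hi
  refine ⟨i, ?_⟩
  rw [← sub_sub_sub_cancel_right (v i) y u, map_sub, hg]
  linarith

lemma IsTwoSmooth.exists_frankWolfe_step (hN : IsTwoSmooth N K) (hK : 1 ≤ K) (hr : 0 < r)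
    (hrR : r ≤ R) (hin : N.closedBall u r ⊆ convexHull ℝ (Set.range v))
    (hout : convexHull ℝ (Set.range v) ⊆ N.closedBall u R)
    (hy : y ∈ convexHull ℝ (Set.range v)) :
    ∃ i, ∃ γ ∈ Set.Icc (0 : ℝ) 1, N (y + γ • (v i - y) - u) ^ 2 ≤
      N (y - u) ^ 2 - (r * N (y - u) + N (y - u) ^ 2) ^ 2 / (4 * K * R ^ 2) := by
  have hR : 0 < R := hr.trans_le hrR
  obtain ⟨g, hg, hsmooth⟩ := hN (y - u)
  obtain ⟨i, hgap⟩ := exists_apply_sub_le_of_apply_eq_sq hr.le hin hg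
  have hyR : N (y - u) ≤ R := hout hy
  have hviR : N (v i - u) ≤ R := hout (subset_convexHull ℝ _ (Set.mem_range_self i))
  set s := N (y - u)
  have hs : 0 ≤ s := apply_nonneg N _
  have hdiam : N (v i - y) ≤ 2 * R := by
    rw [← sub_sub_sub_cancel_right (v i) y u]
    linarith [map_sub_le_add N (v i - u) (y - u)]
  -- The step minimising the quadratic upper bound.
  set γ := (r * s + s ^ 2) / (4 * K * R ^ 2) with hγ
  have hγ0 : 0 ≤ γ := by positivity
  have hγ1 : γ ≤ 1 := by
    rw [hγ, div_le_one (by positivity)]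
    nlinarith [mul_le_mul hrR hyR hs hR.le, mul_le_mul hyR hyR hs hR.le, sq_nonneg R]
  refine ⟨i, γ, ⟨hγ0, hγ1⟩, ?_⟩
  calc N (y + γ • (v i - y) - u) ^ 2
      = N (y - u + γ • (v i - y)) ^ 2 := by rw [add_sub_right_comm]
    _ ≤ s ^ 2 + 2 * g (γ • (v i - y)) + K * N (γ • (v i - y)) ^ 2 := hsmooth _
    _ = s ^ 2 + 2 * (γ * g (v i - y)) + K * (γ * N (v i - y)) ^ 2 := by
      rw [map_smul, smul_eq_mul, map_smul_eq_mul, Real.norm_of_nonneg hγ0]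
    _ ≤ s ^ 2 + 2 * (γ * -(r * s + s ^ 2)) + K * (γ * (2 * R)) ^ 2 := by gcongr
    _ = s ^ 2 - (r * s + s ^ 2) ^ 2 / (4 * K * R ^ 2) := by
      rw [hγ]
      field_simp
      ring

lemma IsTwoSmooth.exists_frankWolfe_seq (hN : IsTwoSmooth N K) (hK : 1 ≤ K) (hr : 0 < r)
    (hrR : r ≤ R) (hin : N.closedBall u r ⊆ convexHull ℝ (Set.range v))
    (hout : convexHull ℝ (Set.range v) ⊆ N.closedBall u R) :
    ∃ y : ℕ → E, (∀ k, y k ∈ sparseHull v (k + 1)) ∧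
      ∀ k, N (y (k + 1) - u) ^ 2 ≤ N (y k - u) ^ 2 -
        (r * N (y k - u) + N (y k - u) ^ 2) ^ 2 / (4 * K * R ^ 2) := by
  have hstep : ∀ k, ∀ y ∈ sparseHull v k, ∃ y' ∈ sparseHull v (k + 1), N (y' - u) ^ 2 ≤
      N (y - u) ^ 2 - (r * N (y - u) + N (y - u) ^ 2) ^ 2 / (4 * K * R ^ 2) := fun k y hy => by
    obtain ⟨i, γ, hγ, hdesc⟩ :=
      hN.exists_frankWolfe_step hK hr hrR hin hout (sparseHull_subset_convexHull hy)
    exact ⟨_, add_smul_sub_mem_sparseHull_succ hy i hγ, hdesc⟩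
  choose! next hnext_mem hnext_desc using hstep
  obtain ⟨_, i, rfl⟩ : (Set.range v).Nonempty :=
    convexHull_nonempty_iff.1 ⟨u, hin (N.mem_closedBall_self hr.le)⟩
  let y : ℕ → E := Nat.rec (v i) fun k => next (k + 1)
  have hmem : ∀ k, y k ∈ sparseHull v (k + 1) := fun k => by
    induction k with
    | zero => exact apply_mem_sparseHull_one i
    | succ k ih => exact hnext_mem _ _ ih
  exact ⟨y, hmem, fun k => hnext_desc _ _ (hmem k)⟩

theorem approx_cara_centered_general (hN : IsTwoSmooth N K) (hN0 : N ≠ 0) (hr : 0 < r)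
    (hin : N.closedBall u r ⊆ convexHull ℝ (Set.range v))
    (hout : convexHull ℝ (Set.range v) ⊆ N.closedBall u R) (hε : 0 < ε) (hεr : 2 * ε ≤ r) :
    ∃ k : ℕ, (k : ℝ) ≤ 20 * (K * R ^ 2 / r ^ 2) * Real.log (r / ε) ∧
      ∃ y ∈ sparseHull v k, N (y - u) ≤ ε := by
  obtain ⟨w, hw⟩ : ∃ w, N w ≠ 0 := DFunLike.ne_iff.1 hN0
  have hK : 1 ≤ K := hN.one_le hw
  have hrR : r ≤ R := le_of_closedBall_subset_closedBall hr.le hw (hin.trans hout)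
  have hR : 0 < R := hr.trans_le hrR
  obtain ⟨y, hmem, hdesc⟩ := hN.exists_frankWolfe_seq hK hr hrR hin hout
  have hradius : 1 ≤ K * R ^ 2 / r ^ 2 := by
    rw [one_le_div (by positivity)]
    nlinarith [mul_le_mul hrR hrR hr.le hR.le]
  have hlog : Real.log 2 ≤ Real.log (r / ε) :=
    Real.log_le_log two_pos ((le_div_iff₀ hε).2 hεr)
  refine ⟨_, ceil_add_ceil_add_one_le hradius hlog, y _, hmem _, ?_⟩
  refine le_of_sq_le_sq ?_ hε.le
  have hs : ∀ k, 0 ≤ N (y k - u) := fun k => apply_nonneg N _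
  refine le_sq_of_two_phase_descent (a := fun k => N (y k - u) ^ 2) (M := 4 * K * R ^ 2) hr hε
    (by positivity) ?_ (fun k => sq_nonneg _) (fun k => (hdesc k).trans ?_)
    (fun k => (hdesc k).trans ?_) (le_of_eq_of_le (by ring) (Nat.le_ceil _))
    (le_of_eq_of_le (by ring) (Nat.le_ceil _))
  · have : N (y 0 - u) ≤ R := hout (sparseHull_subset_convexHull (hmem 0))
    nlinarith [mul_le_mul this this (hs 0) hR.le, sq_nonneg R]
  · have := hs k
    gcongr
    exact le_add_of_nonneg_left (by positivity)
  · have := hs k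
    rw [sub_mul, one_mul, div_mul_eq_mul_div, ← mul_pow]
    gcongr
    exact le_add_of_nonneg_right (by positivity)

end FrankWolfe

section LpSmooth

variable {κ : Type*} [Fintype κ] {p : ℝ}

lemma add_deriv_mul_add_le_of_deriv2_le {f f' f'' : ℝ → ℝ} {M x y : ℝ}
    (hf : ∀ t, HasDerivAt f (f' t) t) (hf' : ∀ t, HasDerivAt f' (f'' t) t)
    (hM : ∀ t, f'' t ≤ M) (hxy : x < y) :
    f y ≤ f x + f' x * (y - x) + M / 2 * (y - x) ^ 2 := by
  have hg : ∀ t, HasDerivAt (fun t => M / 2 * (t - x) ^ 2 - f t) (M * (t - x) - f' t) t := fun t =>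
    (((((hasDerivAt_id t).sub_const x).pow 2).const_mul (M / 2)).sub (hf t)).congr_deriv
      (by simp; ring)
  have hg' : ∀ t, HasDerivAt (fun t => M * (t - x) - f' t) (M - f'' t) t := fun t =>
    ((((hasDerivAt_id t).sub_const x).const_mul M).sub (hf' t)).congr_deriv (by simp)
  have hconvex : ConvexOn ℝ Set.univ fun t => M / 2 * (t - x) ^ 2 - f t :=
    convexOn_of_hasDerivWithinAt2_nonneg convex_univ
      (fun t _ => (hg t).continuousAt.continuousWithinAt) (fun t _ => (hg t).hasDerivWithinAt)
      (fun t _ => (hg' t).hasDerivWithinAt) (fun t _ => sub_nonneg.2 (hM t))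
  have hslope := hconvex.le_slope_of_hasDerivAt (Set.mem_univ x) (Set.mem_univ y) hxy (hg x)
  rw [slope_def_field, le_div_iff₀ (sub_pos.2 hxy)] at hslope
  simp only [sub_self] at hslope
  linarith

lemma hasDerivAt_abs_rpow_mul_self {q : ℝ} (hq : 0 ≤ q) (x : ℝ) :
    HasDerivAt (fun y => |y| ^ q * y) ((q + 1) * |x| ^ q) x := by
  have hcont : Continuous fun y : ℝ => |y| ^ q := continuous_abs.rpow_const fun _ => Or.inr hq
  refine hasDerivAt_of_hasDerivAt_of_ne' (x := 0) (fun y hy => ?_)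
    (hcont.mul continuous_id).continuousAt (hcont.const_mul (q + 1)).continuousAt x
  refine (((hasDerivAt_abs hy).rpow_const (Or.inl (abs_ne_zero.2 hy))).mul
    (hasDerivAt_id y)).congr_deriv ?_
  have hsign : (SignType.sign y : ℝ) * y = |y| := sign_mul_self y
  have hpow : |y| ^ (q - 1) * |y| = |y| ^ q := by
    rw [← Real.rpow_add_one (abs_ne_zero.2 hy), sub_add_cancel]
  simp only [id, mul_one]
  linear_combination (q * |y| ^ (q - 1)) * hsign + q * hpow

lemma hasDerivAt_sum_comp_line {φ φ' : ℝ → ℝ} (hφ : ∀ x, HasDerivAt φ (φ' x) x) (c z h : κ → ℝ)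
    (t : ℝ) : HasDerivAt (fun t : ℝ => ∑ j, φ ((z + t • h) j) * c j)
      (∑ j, φ' ((z + t • h) j) * h j * c j) t := by
  refine HasDerivAt.fun_sum fun j _ => ((hφ _).comp t ?_).mul_const (c j)
  simpa using ((hasDerivAt_id t).mul_const (h j)).const_add (z j)

lemma sum_abs_rpow_nonneg (p : ℝ) (z : κ → ℝ) : 0 ≤ ∑ j, |z j| ^ p :=
  sum_nonneg fun _ _ => by positivity

lemma sum_abs_rpow_pos {z : κ → ℝ} (hz : z ≠ 0) (p : ℝ) : 0 < ∑ j, |z j| ^ p := by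
  obtain ⟨j, hj⟩ := Function.ne_iff.1 hz
  exact sum_pos' (fun _ _ => by positivity)
    ⟨j, mem_univ j, Real.rpow_pos_of_pos (abs_pos.2 hj) p⟩

lemma lpNorm_sq (p : ℝ) (z : κ → ℝ) : lpNorm p z ^ 2 = (∑ j, |z j| ^ p) ^ (2 / p) := by
  rw [lpNorm, ← Real.rpow_mul_natCast (sum_abs_rpow_nonneg p z), Nat.cast_ofNat, one_div_mul_eq_div]

lemma lpNorm_smul (hp : p ≠ 0) (c : ℝ) (z : κ → ℝ) : lpNorm p (c • z) = |c| * lpNorm p z := by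
  simp only [lpNorm, Pi.smul_apply, smul_eq_mul, abs_mul,
    Real.mul_rpow (abs_nonneg _) (abs_nonneg _), ← mul_sum]
  rw [Real.mul_rpow (by positivity) (sum_abs_rpow_nonneg p z), ← Real.rpow_mul (abs_nonneg c),
    mul_one_div_cancel hp, Real.rpow_one]

/-- `lpNorm p` bundled as a seminorm. -/
noncomputable def lpSeminorm (κ : Type*) [Fintype κ] (hp : 1 ≤ p) : Seminorm ℝ (κ → ℝ) :=
  Seminorm.of (lpNorm p) (fun x y => Real.Lp_add_le univ x y hp)
    (fun c z => lpNorm_smul (zero_lt_one.trans_le hp).ne' c z)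

lemma lpSeminorm_apply (hp : 1 ≤ p) (z : κ → ℝ) : lpSeminorm κ hp z = lpNorm p z := rfl

lemma lpSeminorm_ne_zero [Nonempty κ] (hp : 1 ≤ p) : lpSeminorm κ hp ≠ 0 := by
  refine DFunLike.ne_iff.2 ⟨1, ?_⟩
  exact (Real.rpow_pos_of_pos (sum_abs_rpow_pos one_ne_zero p) _).ne'

/-- The duality map of `ℓ_p`: half the gradient of `lpNorm p ^ 2` at `z`, as a functional. -/
noncomputable def lpDualityMap (p : ℝ) (z : κ → ℝ) : (κ → ℝ) →ₗ[ℝ] ℝ :=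
  (∑ j, |z j| ^ p) ^ (2 / p - 1) • Fintype.linearCombination ℝ fun j => |z j| ^ (p - 2) * z j

lemma lpDualityMap_apply (p : ℝ) (z h : κ → ℝ) : lpDualityMap p z h =
    (∑ j, |z j| ^ p) ^ (2 / p - 1) * ∑ j, |z j| ^ (p - 2) * z j * h j := by
  simp [lpDualityMap, Fintype.linearCombination_apply, mul_comm]

lemma lpDualityMap_self (hp : p ≠ 0) (z : κ → ℝ) : lpDualityMap p z z = lpNorm p z ^ 2 := by
  have hcoord : ∀ x : ℝ, |x| ^ (p - 2) * x * x = |x| ^ p := fun x => by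
    rcases eq_or_ne x 0 with rfl | hx
    · simp [hp]
    · rw [mul_assoc, ← sq, ← sq_abs, ← Real.rpow_natCast, ← Real.rpow_add (abs_pos.2 hx),
        Nat.cast_ofNat, sub_add_cancel]
  simp only [lpDualityMap_apply, lpNorm_sq, hcoord]
  rcases (sum_abs_rpow_nonneg p z).eq_or_lt with hS | hS
  · simp [← hS, hp]
  · rw [← Real.rpow_add_one hS.ne', sub_add_cancel]

lemma sum_abs_rpow_sub_two_mul_sq_le (hp : 2 ≤ p) (z h : κ → ℝ) :
    ∑ j, |z j| ^ (p - 2) * h j ^ 2 ≤ (∑ j, |z j| ^ p) ^ (1 - 2 / p) * lpNorm p h ^ 2 := by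
  rcases hp.eq_or_lt with rfl | hp
  · simp [lpNorm_sq]
  have hp2 : 0 < p - 2 := sub_pos.2 hp
  have hconj : (p / (p - 2)).HolderConjugate (p / 2) := by
    rw [Real.holderConjugate_iff, one_lt_div hp2]
    exact ⟨by linarith, by field_simp; ring⟩
  have hz : ∀ j, (|z j| ^ (p - 2)) ^ (p / (p - 2)) = |z j| ^ p := fun j => by
    rw [← Real.rpow_mul (abs_nonneg _), mul_div_cancel₀ _ hp2.ne']
  have hh : ∀ j, (h j ^ 2) ^ (p / 2) = |h j| ^ p := fun j => by
    rw [← sq_abs, ← Real.rpow_natCast_mul (abs_nonneg _), Nat.cast_ofNat,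
      mul_div_cancel₀ p two_ne_zero]
  have hHolder := Real.inner_le_Lp_mul_Lq_of_nonneg univ hconj
    (fun j _ => Real.rpow_nonneg (abs_nonneg (z j)) (p - 2)) (fun j _ => sq_nonneg (h j))
  simp only [hz, hh, one_div_div] at hHolder
  rwa [lpNorm_sq, one_sub_div (by linarith)]

lemma hasDerivAt_lpNorm_sq_line (hp : 1 < p) {z h : κ → ℝ} {t : ℝ} (hne : z + t • h ≠ 0) :
    HasDerivAt (fun t : ℝ => lpNorm p (z + t • h) ^ 2) (2 * lpDualityMap p (z + t • h) h) t := by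
  simp only [lpNorm_sq, lpDualityMap_apply]
  have hS := hasDerivAt_sum_comp_line (fun x => hasDerivAt_abs_rpow x hp) 1 z h t
  simp only [Pi.one_apply, mul_one] at hS
  refine (hS.rpow_const (Or.inl (sum_abs_rpow_pos hne p).ne')).congr_deriv ?_
  have : p ≠ 0 := by linarith
  simp only [mul_assoc, ← mul_sum]
  field_simp

lemma exists_hasDerivAt_lpDualityMap_line_le (hp : 2 ≤ p) {z h : κ → ℝ} {t : ℝ}
    (hne : z + t • h ≠ 0) : ∃ D ≤ (p - 1) * lpNorm p h ^ 2,
      HasDerivAt (fun t : ℝ => lpDualityMap p (z + t • h) h) D t := by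
  have hS := hasDerivAt_sum_comp_line (fun x => hasDerivAt_abs_rpow x (by linarith : 1 < p)) 1 z h t
  have hG := hasDerivAt_sum_comp_line
    (fun x => hasDerivAt_abs_rpow_mul_self (by linarith : 0 ≤ p - 2) x) h z h t
  simp only [Pi.one_apply, mul_one] at hS
  have hpos := sum_abs_rpow_pos hne p
  have hHolder := sum_abs_rpow_sub_two_mul_sq_le hp (z + t • h) h
  simp only [lpDualityMap_apply]
  refine ⟨_, ?_, (hS.rpow_const (p := 2 / p - 1) (Or.inl hpos.ne')).mul hG⟩
  simp only [mul_assoc, ← mul_sum, ← sq]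
  simp only [← mul_assoc]
  set S := ∑ j, |(z + t • h) j| ^ p
  set G := ∑ j, |(z + t • h) j| ^ (p - 2) * (z + t • h) j * h j
  set H := ∑ j, |(z + t • h) j| ^ (p - 2) * h j ^ 2
  have hconcave : p * G * (2 / p - 1) * S ^ (2 / p - 1 - 1) * G ≤ 0 := by
    have hfactor : p * G * (2 / p - 1) * S ^ (2 / p - 1 - 1) * G
        = (2 - p) * (S ^ (2 / p - 1 - 1) * G ^ 2) := by
      have : p ≠ 0 := by linarith
      field_simp
    rw [hfactor]
    exact mul_nonpos_of_nonpos_of_nonneg (by linarith) (by positivity)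
  have hHess : S ^ (2 / p - 1) * H ≤ lpNorm p h ^ 2 :=
    calc S ^ (2 / p - 1) * H ≤ S ^ (2 / p - 1) * (S ^ (1 - 2 / p) * lpNorm p h ^ 2) := by gcongr
      _ = lpNorm p h ^ 2 := by
        rw [← mul_assoc, ← Real.rpow_add hpos, sub_add_sub_cancel, sub_self, Real.rpow_zero,
          one_mul]
  linarith [mul_le_mul_of_nonneg_left hHess (by linarith : 0 ≤ p - 1)]

lemma isTwoSmooth_lpSeminorm (hp : 2 ≤ p) :
    IsTwoSmooth (lpSeminorm κ (one_le_two.trans hp)) (p - 1) := by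
  refine fun z => ⟨lpDualityMap p z, lpDualityMap_self (by linarith) z, fun h => ?_⟩
  simp only [lpSeminorm_apply]
  by_cases havoid : ∀ t : ℝ, z + t • h ≠ 0
  · choose D hD hderiv using fun t => exists_hasDerivAt_lpDualityMap_line_le hp (havoid t)
    have htaylor := add_deriv_mul_add_le_of_deriv2_le
      (fun t => hasDerivAt_lpNorm_sq_line (by linarith : 1 < p) (havoid t))
      (fun t => (hderiv t).const_mul 2) (fun t => mul_le_mul_of_nonneg_left (hD t) zero_le_two)
      zero_lt_one
    simp only [one_smul, zero_smul, add_zero] at htaylor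
    linarith
  · -- On a line through the origin the norm is the absolute value, up to scaling.
    push Not at havoid
    obtain ⟨t, ht⟩ := havoid
    obtain rfl : z = (-t) • h := by rw [neg_smul, eq_neg_of_add_eq_zero_left ht]
    have hdual : lpDualityMap p ((-t) • h) h = -t * lpNorm p h ^ 2 := by
      rcases eq_or_ne t 0 with rfl | ht0
      · simp [lpDualityMap_apply]
      · have hself := lpDualityMap_self (by linarith : p ≠ 0) ((-t) • h)
        rw [map_smul, smul_eq_mul, lpNorm_smul (by linarith), mul_pow, sq_abs, sq (-t),
          mul_assoc] at hself
        exact mul_left_cancel₀ (neg_ne_zero.2 ht0) hself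
    have hsum : (-t) • h + h = (1 - t) • h := by module
    rw [hdual, hsum, lpNorm_smul (by linarith), lpNorm_smul (by linarith), mul_pow, mul_pow,
      sq_abs, sq_abs]
    nlinarith [mul_nonneg (sub_nonneg.2 hp) (sq_nonneg (lpNorm p h))]

end LpSmooth

/-- **Corollary to Theorem 3.5 of the paper**: if `u ∈ P = conv{v₁,…,vₙ}` satisfies
`B_p(u,r) ⊆ P ⊆ B_p(u,1)` and `r ≥ 2ε`, then there exists a point of the unit simplex
supported on `O((p/r²)·log(r/ε))` coordinates whose combination of the `vᵢ`
is `ε`-close to `u` in ℓ_p norm. -/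
theorem approx_cara_centered :
    ∃ C : ℝ, 0 < C ∧
      ∀ (d n : ℕ), 0 < d → 0 < n →
      ∀ (p : ℝ), 2 ≤ p →
      ∀ (v : Fin n → Fin d → ℝ) (u : Fin d → ℝ) (r : ℝ), 0 < r →
      u ∈ convexHull ℝ (Set.range v) →
      {z : Fin d → ℝ | lpNorm p (fun j => z j - u j) ≤ r} ⊆ convexHull ℝ (Set.range v) →
      convexHull ℝ (Set.range v) ⊆ {z : Fin d → ℝ | lpNorm p (fun j => z j - u j) ≤ 1} →
      ∀ (ε : ℝ), 0 < ε → 2 * ε ≤ r →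
      ∃ x : Fin n → ℝ, (∀ i, 0 ≤ x i) ∧ (∑ i, x i = 1) ∧
        (((Finset.univ.filter (fun i => x i ≠ 0)).card : ℝ) ≤
          C * (p / r ^ 2) * Real.log (r / ε)) ∧
        lpNorm p (fun j => (∑ i, x i * v i j) - u j) ≤ ε := by
  refine ⟨20, by norm_num, fun d n hd _ p hp v u r hr _ hin hout ε hε hεr => ?_⟩
  have : Nonempty (Fin d) := ⟨⟨0, hd⟩⟩
  obtain ⟨k, hk, y, hy, hyε⟩ := approx_cara_centered_general (isTwoSmooth_lpSeminorm hp)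
    (lpSeminorm_ne_zero _) hr hin hout hε hεr
  obtain ⟨x, ⟨hx0, hx1⟩, hcard, rfl⟩ := exists_stdSimplex_of_mem_sparseHull hy
  refine ⟨x, hx0, hx1, ?_, ?_⟩
  · have hlog : 0 ≤ Real.log (r / ε) := Real.log_nonneg ((one_le_div hε).2 (by linarith))
    calc (#{i | x i ≠ 0} : ℝ) ≤ k := by exact_mod_cast hcard
      _ ≤ 20 * ((p - 1) * 1 ^ 2 / r ^ 2) * Real.log (r / ε) := hk
      _ ≤ 20 * (p / r ^ 2) * Real.log (r / ε) := by
        gcongr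
        linarith
  · convert hyε using 1
    simp [lpSeminorm_apply, Pi.sub_def]
end

section
/- There exists a constant K > 0 such that for every real p ≥ 2 and every ε with 0 < ε ≤ 1/2, there exists n₀ such that for all n ≥ n₀ the following holds: there is an n×n real matrix V whose every column has ℓ_p norm exactly 1, such that, setting u = V·(1/n, …, 1/n)ᵀ (so u is a convex combination of the columns of V), every vector x̃ in the unit simplex Δₙ with at most K·p/ε² nonzero coordinates satisfies ‖V x̃ − u‖_p > ε. -/
open Finset Matrix

/-!
Fix `m` signs and let the columns be the `m` coordinate functions `s ↦ s i` on the sign patterns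
`s ∈ {±1}^m`, normalised in `ℓ_p`. Let `u` be the average of the columns, and suppose `x` has total
mass `1` and uses only the columns in a set `S` with `|S| ≤ p / (16 ε²)`. Test `V (x - u)` against
the Riesz product `R = ∏ i ∈ S, (1 + 2 ε s i)`. Since `R` has correlation `2 ε` with each sign in
`S` and `0` with the others, the pairing is `2 ε` times the mass that `x - u` gives to `S`, which is
at least `3/4` once `m ≥ 8 |S|`. On the other side, the exponent `q` conjugate to `p` lies in
`[1, 2]`, so Bernoulli's inequality bounds the normalised `ℓ_q` norm of `R` by
`exp (4 ε² |S| / p) ≤ exp (1/4) < 3/2`. Hölder's inequality gives `‖V (x - u)‖_p > ε`.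

To get an `n × n` matrix, repeat the `m` columns cyclically and add zero rows.
-/

lemma lpNorm_nonneg {ι : Type*} [Fintype ι] (p : ℝ) (x : ι → ℝ) : 0 ≤ lpNorm p x := by
  unfold lpNorm
  positivity

section RieszProduct

variable {ι : Type*} [Fintype ι]

/-- The Riesz product `∏ i, (1 + a i * s i)`, as a function of the sign pattern `s`. It serves as
the test function certifying lower bounds on `ℓ_p` norms of combinations of signs. -/
def rieszProduct (a : ι → ℝ) (s : ι → ℤˣ) : ℝ :=
  ∏ i, (1 + a i * (s i : ℤ))

lemma sum_units_int {M : Type*} [AddCommMonoid M] (f : ℤˣ → M) : ∑ b, f b = f 1 + f (-1) :=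
  sum_pair (by decide)

lemma abs_sign (b : ℤˣ) : |((b : ℤ) : ℝ)| = 1 := by
  obtain rfl | rfl := Int.units_eq_one_or b <;> simp

lemma one_add_mul_sign_nonneg {a : ℝ} (ha : |a| ≤ 1) (b : ℤˣ) : 0 ≤ 1 + a * (b : ℤ) :=
  neg_le_iff_add_nonneg'.mp <| neg_le_of_abs_le <| by rwa [abs_mul, abs_sign, mul_one]

lemma rieszProduct_nonneg {a : ι → ℝ} (ha : ∀ i, |a i| ≤ 1) (s : ι → ℤˣ) :
    0 ≤ rieszProduct a s :=
  prod_nonneg fun i _ => one_add_mul_sign_nonneg (ha i) (s i)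

lemma one_add_rpow_add_one_sub_rpow_le {a q : ℝ} (ha : |a| ≤ 1) (hq₁ : 1 ≤ q) (hq₂ : q ≤ 2) :
    (1 + a) ^ q + (1 - a) ^ q ≤ 2 * Real.exp ((q - 1) * a ^ 2) := by
  have bernoulli {t : ℝ} (ht : |t| ≤ 1) : (1 + t) ^ q ≤ (1 + (q - 1) * t) * (1 + t) := by
    have ht' : -1 ≤ t := (abs_le.mp ht).1
    calc (1 + t) ^ q = (1 + t) ^ (q - 1) * (1 + t) := by
          rw [← Real.rpow_add_one' (by linarith) (by linarith), sub_add_cancel]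
      _ ≤ (1 + (q - 1) * t) * (1 + t) :=
          mul_le_mul_of_nonneg_right
            (rpow_one_add_le_one_add_mul_self ht' (by linarith) (by linarith)) (by linarith)
  calc (1 + a) ^ q + (1 - a) ^ q
      ≤ (1 + (q - 1) * a) * (1 + a) + (1 + (q - 1) * -a) * (1 + -a) :=
        add_le_add (bernoulli ha) (bernoulli (by rwa [abs_neg]))
    _ = 2 * ((q - 1) * a ^ 2 + 1) := by ring
    _ ≤ 2 * Real.exp ((q - 1) * a ^ 2) := by gcongr; exact Real.add_one_le_exp _

variable [DecidableEq ι]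

lemma sum_sign_mul_rieszProduct (a : ι → ℝ) (i : ι) :
    ∑ s, (s i : ℤ) * rieszProduct a s = 2 ^ Fintype.card ι * a i := by
  let F (j : ι) (b : ℤˣ) : ℝ := (if j = i then ((b : ℤ) : ℝ) else 1) * (1 + a j * (b : ℤ))
  have sum_F (j : ι) : ∑ b, F j b = 2 * if j = i then a j else 1 := by
    simp only [F, sum_units_int, Units.val_one, Units.val_neg, Int.cast_one, Int.cast_neg]
    split_ifs <;> ring
  calc ∑ s, (s i : ℤ) * rieszProduct a s
      = ∑ s : ι → ℤˣ, ∏ j, F j (s j) := by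
        simp only [F, rieszProduct, prod_mul_distrib, prod_ite_eq', mem_univ, if_true]
    _ = ∏ j, ∑ b, F j b := (Fintype.prod_sum F).symm
    _ = 2 ^ Fintype.card ι * a i := by
        simp only [sum_F, prod_mul_distrib, prod_const, card_univ, prod_ite_eq', mem_univ, if_true]

lemma sum_rieszProduct_rpow_le {a : ι → ℝ} (ha : ∀ i, |a i| ≤ 1) {q : ℝ} (hq₁ : 1 ≤ q)
    (hq₂ : q ≤ 2) :
    ∑ s, rieszProduct a s ^ q ≤ 2 ^ Fintype.card ι * Real.exp ((q - 1) * ∑ i, a i ^ 2) := by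
  have sum_factor_le (i : ι) :
      ∑ b : ℤˣ, (1 + a i * (b : ℤ)) ^ q ≤ 2 * Real.exp ((q - 1) * a i ^ 2) := by
    simpa [sum_units_int, ← sub_eq_add_neg] using one_add_rpow_add_one_sub_rpow_le (ha i) hq₁ hq₂
  calc ∑ s, rieszProduct a s ^ q
      = ∑ s : ι → ℤˣ, ∏ i, (1 + a i * (s i : ℤ)) ^ q :=
        sum_congr rfl fun s _ =>
          (Real.finsetProd_rpow _ _ (fun i _ => one_add_mul_sign_nonneg (ha i) (s i)) q).symm
    _ = ∏ i, ∑ b : ℤˣ, (1 + a i * (b : ℤ)) ^ q :=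
        (Fintype.prod_sum fun i (b : ℤˣ) => (1 + a i * (b : ℤ)) ^ q).symm
    _ ≤ ∏ i, 2 * Real.exp ((q - 1) * a i ^ 2) :=
        prod_le_prod
          (fun i _ => sum_nonneg fun b _ => Real.rpow_nonneg (one_add_mul_sign_nonneg (ha i) b) q)
          fun i _ => sum_factor_le i
    _ = 2 ^ Fintype.card ι * Real.exp ((q - 1) * ∑ i, a i ^ 2) := by
        simp [prod_mul_distrib, mul_sum, Real.exp_sum]

lemma lpNorm_rieszProduct_le {a : ι → ℝ} (ha : ∀ i, |a i| ≤ 1) {q : ℝ} (hq₁ : 1 ≤ q)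
    (hq₂ : q ≤ 2) :
    lpNorm q (rieszProduct a) ≤
      (2 ^ Fintype.card ι) ^ (1 / q) * Real.exp ((1 - 1 / q) * ∑ i, a i ^ 2) := by
  have hq : q ≠ 0 := by linarith
  calc lpNorm q (rieszProduct a)
      = (∑ s, rieszProduct a s ^ q) ^ (1 / q) := by
        simp only [lpNorm, abs_of_nonneg (rieszProduct_nonneg ha _)]
    _ ≤ (2 ^ Fintype.card ι * Real.exp ((q - 1) * ∑ i, a i ^ 2)) ^ (1 / q) :=
        Real.rpow_le_rpow
          (sum_nonneg fun s _ => Real.rpow_nonneg (rieszProduct_nonneg ha s) q)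
          (sum_rieszProduct_rpow_le ha hq₁ hq₂) (by positivity)
    _ = (2 ^ Fintype.card ι) ^ (1 / q) * Real.exp ((1 - 1 / q) * ∑ i, a i ^ 2) := by
        rw [Real.mul_rpow (by positivity) (by positivity), ← Real.exp_mul]
        congr 2
        field_simp

end RieszProduct

section SignMatrix

variable {ι κ : Type*} [Fintype ι]

/-- The matrix whose `k`-th column is the coordinate function `s ↦ s (c k)` on the sign patterns,
scaled to have unit `ℓ_p` norm. The labelling `c` may repeat columns. -/
noncomputable def signMatrix (p : ℝ) (c : κ → ι) : Matrix (ι → ℤˣ) κ ℝ :=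
  Matrix.of fun s k => (2 ^ Fintype.card ι) ^ (-(1 / p)) * (s (c k) : ℤ)

variable [DecidableEq ι]

lemma lpNorm_col_signMatrix {p : ℝ} (hp : p ≠ 0) (c : κ → ι) (k : κ) :
    lpNorm p ((signMatrix p c).col k) = 1 := by
  have abs_entry (s : ι → ℤˣ) : |signMatrix p c s k| ^ p = (2 ^ Fintype.card ι)⁻¹ := by
    rw [signMatrix, of_apply, abs_mul, abs_sign, mul_one, abs_of_nonneg (by positivity),
      ← Real.rpow_mul (by positivity), neg_mul, one_div_mul_cancel hp, Real.rpow_neg_one]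
  simp [lpNorm, abs_entry]

lemma rieszProduct_vecMul_signMatrix (p : ℝ) (c : κ → ι) (a : ι → ℝ) :
    rieszProduct a ᵥ* signMatrix p c = (2 ^ Fintype.card ι : ℝ) ^ (1 - 1 / p) • (a ∘ c) := by
  ext k
  calc (rieszProduct a ᵥ* signMatrix p c) k
      = (2 ^ Fintype.card ι) ^ (-(1 / p)) * ∑ s, (s (c k) : ℤ) * rieszProduct a s := by
        simp only [vecMul, dotProduct, signMatrix, of_apply, mul_sum]
        exact sum_congr rfl fun s _ => by ring
    _ = (2 ^ Fintype.card ι : ℝ) ^ (1 - 1 / p) * a (c k) := by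
        rw [sum_sign_mul_rieszProduct, sub_eq_neg_add, Real.rpow_add (by positivity), Real.rpow_one,
          mul_assoc]

variable [Fintype κ]

lemma dotProduct_le_lpNorm_signMatrix_mulVec {p : ℝ} (hp : 2 ≤ p) (c : κ → ι) {a : ι → ℝ}
    (ha : ∀ i, |a i| ≤ 1) (b : κ → ℝ) :
    (a ∘ c) ⬝ᵥ b ≤ lpNorm p (signMatrix p c *ᵥ b) * Real.exp ((∑ i, a i ^ 2) / p) := by
  obtain ⟨q, hpq⟩ : ∃ q, p.HolderConjugate q := ⟨_, .conjExponent (by linarith)⟩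
  have hq₁ : 1 ≤ q := hpq.symm.lt.le
  have hq₂ : q ≤ 2 := by nlinarith [hpq.mul_eq_add]
  have hp_inv : 1 - 1 / q = 1 / p := by simpa using hpq.symm.one_sub_inv
  have hq_inv : 1 - 1 / p = 1 / q := by simpa using hpq.one_sub_inv
  set N : ℝ := 2 ^ Fintype.card ι
  have hN : 0 < N ^ (1 / q) := by positivity
  refine le_of_mul_le_mul_left ?_ hN
  calc N ^ (1 / q) * ((a ∘ c) ⬝ᵥ b)
      = signMatrix p c *ᵥ b ⬝ᵥ rieszProduct a := by
        rw [dotProduct_comm _ (rieszProduct a), dotProduct_mulVec, rieszProduct_vecMul_signMatrix,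
          smul_dotProduct, hq_inv, smul_eq_mul]
    _ ≤ lpNorm p (signMatrix p c *ᵥ b) * lpNorm q (rieszProduct a) :=
        Real.inner_le_Lp_mul_Lq _ _ _ hpq
    _ ≤ lpNorm p (signMatrix p c *ᵥ b) * (N ^ (1 / q) * Real.exp ((1 - 1 / q) * ∑ i, a i ^ 2)) := by
        gcongr
        · exact lpNorm_nonneg p _
        · exact lpNorm_rieszProduct_le ha hq₁ hq₂
    _ = N ^ (1 / q) * (lpNorm p (signMatrix p c *ᵥ b) * Real.exp ((∑ i, a i ^ 2) / p)) := by
        rw [hp_inv, one_div_mul_eq_div]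
        ring

lemma mul_sum_le_lpNorm_signMatrix_mulVec {p : ℝ} (hp : 2 ≤ p) (c : κ → ι) {α : ℝ} (hα : |α| ≤ 1)
    (S : Finset ι) (b : κ → ℝ) :
    α * ∑ k with c k ∈ S, b k ≤
      lpNorm p (signMatrix p c *ᵥ b) * Real.exp (α ^ 2 * #S / p) := by
  let a (i : ι) : ℝ := if i ∈ S then α else 0
  have ha (i : ι) : |a i| ≤ 1 := by by_cases h : i ∈ S <;> simp [a, h, hα]
  have sum_sq : ∑ i, a i ^ 2 = α ^ 2 * #S := by simp [a, ite_pow, mul_comm]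
  have dotProduct_eq : (a ∘ c) ⬝ᵥ b = α * ∑ k with c k ∈ S, b k := by
    simp [a, dotProduct, mul_sum, sum_filter]
  simpa only [sum_sq, dotProduct_eq] using dotProduct_le_lpNorm_signMatrix_mulVec hp c ha b

lemma exp_one_div_four_lt : Real.exp (1 / 4) < 3 / 2 :=
  (Real.exp_bound_div_one_sub_of_interval' (by norm_num) (by norm_num)).trans (by norm_num)

lemma lt_lpNorm_signMatrix_mulVec {p ε : ℝ} (hp : 2 ≤ p) (hε : 0 < ε) (hε' : ε ≤ 1 / 2)
    (c : κ → ι) {S : Finset ι} (hS : #S ≤ 1 / 16 * p / ε ^ 2) {b : κ → ℝ}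
    (hb : 3 / 4 ≤ ∑ k with c k ∈ S, b k) : ε < lpNorm p (signMatrix p c *ᵥ b) := by
  set L := lpNorm p (signMatrix p c *ᵥ b)
  have exponent_le : (2 * ε) ^ 2 * #S / p ≤ 1 / 4 := by
    rw [le_div_iff₀ (by positivity)] at hS
    rw [div_le_iff₀ (by linarith)]
    linarith
  have hL : 3 / 2 * ε ≤ L * Real.exp (1 / 4) :=
    calc 3 / 2 * ε ≤ 2 * ε * ∑ k with c k ∈ S, b k := by nlinarith
      _ ≤ L * Real.exp ((2 * ε) ^ 2 * #S / p) :=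
          mul_sum_le_lpNorm_signMatrix_mulVec hp c (abs_le.mpr ⟨by linarith, by linarith⟩) S b
      _ ≤ L * Real.exp (1 / 4) := by
          gcongr
          exact lpNorm_nonneg p _
  by_contra! hLε
  nlinarith [exp_one_div_four_lt, Real.exp_pos (1 / 4)]

end SignMatrix

lemma lpNorm_one_submatrix_mulVec {α β : Type*} [Fintype α] [Fintype β] [DecidableEq β] {p : ℝ}
    (hp : p ≠ 0) (e : α ↪ β) (f : α → ℝ) :
    lpNorm p ((1 : Matrix β β ℝ).submatrix id e *ᵥ f) = lpNorm p f := by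
  classical
  have apply_range (s : α) : ((1 : Matrix β β ℝ).submatrix id e *ᵥ f) (e s) = f s := by
    simp [mulVec, dotProduct, one_apply]
  have apply_notMem (j : β) (hj : j ∉ Set.range e) :
      ((1 : Matrix β β ℝ).submatrix id e *ᵥ f) j = 0 :=
    sum_eq_zero fun s _ => mul_eq_zero_of_left (one_apply_ne fun h => hj ⟨s, h.symm⟩) _
  unfold lpNorm
  congr 1
  refine (Fintype.sum_of_injective e e.injective _ _ (fun j hj => ?_) fun s => ?_).symm
  · rw [apply_notMem j hj, abs_zero, Real.zero_rpow hp]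
  · rw [apply_range]

lemma card_filter_ofNat_eq_le (m n : ℕ) [NeZero m] (l : Fin m) :
    #{i : Fin n | Fin.ofNat m i = l} ≤ n / m + 1 := by
  have mod_div_injOn : Set.InjOn (fun i : Fin n => (i : ℕ) / m) {i | Fin.ofNat m i = l} := by
    intro i hi j hj (hdiv : (i : ℕ) / m = j / m)
    have hmod : (i : ℕ) % m = j % m := congrArg Fin.val (hi.trans hj.symm)
    exact Fin.ext (by rw [← Nat.div_add_mod i m, ← Nat.div_add_mod j m, hmod, hdiv])
  rw [← card_range (n / m + 1)]
  refine card_le_card_of_injOn _ (fun i _ => ?_) (by simpa using mod_div_injOn)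
  exact mem_coe.mpr (mem_range_succ_iff.mpr (Nat.div_le_div_right i.2.le))

lemma four_mul_card_filter_ofNat_mem_le {m n : ℕ} [NeZero m] (hmn : m ≤ n) {S : Finset (Fin m)}
    (hS : 8 * #S ≤ m) : 4 * #{i : Fin n | Fin.ofNat m i ∈ S} ≤ n := by
  have card_le : #{i : Fin n | Fin.ofNat m i ∈ S} ≤ (n / m + 1) * #S := by
    refine card_le_mul_card_image_of_maps_to (f := fun i : Fin n => Fin.ofNat m i)
      (fun i hi => (mem_filter.mp hi).2) _ fun l _ => ?_
    exact (card_le_card (filter_subset_filter _ (subset_univ _))).trans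
      (card_filter_ofNat_eq_le m n l)
  have two_mul_le : 2 * (4 * #{i : Fin n | Fin.ofNat m i ∈ S}) ≤ 2 * n :=
    calc 2 * (4 * #{i : Fin n | Fin.ofNat m i ∈ S}) ≤ (n / m + 1) * (8 * #S) := by linarith
      _ ≤ (n / m + 1) * m := by gcongr
      _ = n / m * m + m := by ring
      _ ≤ 2 * n := by linarith [Nat.div_mul_le_self n m]
  exact Nat.le_of_mul_le_mul_left two_mul_le two_pos

lemma three_fourths_le_sum_sub_uniform {m n : ℕ} [NeZero m] (hmn : m ≤ n) {S : Finset (Fin m)}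
    (hS : 8 * #S ≤ m) {x : Fin n → ℝ} (hx : ∑ i, x i = 1)
    (hxS : ∀ i, x i ≠ 0 → Fin.ofNat m i ∈ S) :
    3 / 4 ≤ ∑ i with Fin.ofNat m (i : Fin n) ∈ S, (x i - 1 / n) := by
  have hn : (0 : ℝ) < n := by exact_mod_cast (NeZero.pos m).trans_le hmn
  have hcard : (4 : ℝ) * #{i : Fin n | Fin.ofNat m i ∈ S} ≤ n := by
    exact_mod_cast four_mul_card_filter_ofNat_mem_le hmn hS
  have uniform_le : #{i : Fin n | Fin.ofNat m i ∈ S} * (1 / n : ℝ) ≤ 1 / 4 := by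
    rw [mul_one_div, div_le_iff₀ hn]
    linarith
  rw [sum_sub_distrib, sum_filter_of_ne fun i _ => hxS i, hx, sum_const, nsmul_eq_mul]
  linarith

theorem cara_lower_bound_general {p ε : ℝ} (hp : 2 ≤ p) (hε : 0 < ε) (hε' : ε ≤ 1 / 2) :
    ∃ n₀ : ℕ, ∀ n : ℕ, n₀ ≤ n → ∃ V : Matrix (Fin n) (Fin n) ℝ,
      (∀ i, lpNorm p (V.col i) = 1) ∧
      ∀ x : Fin n → ℝ, ∑ i, x i = 1 → #{i | x i ≠ 0} ≤ 1 / 16 * p / ε ^ 2 →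
        ε < lpNorm p (V *ᵥ x - V *ᵥ fun _ => 1 / (n : ℝ)) := by
  have hp₀ : p ≠ 0 := by linarith
  let m : ℕ := 8 * (⌊1 / 16 * p / ε ^ 2⌋₊ + 1)
  refine ⟨2 ^ m, fun n hn => ?_⟩
  have hmn : m ≤ n := Nat.lt_two_pow_self.le.trans hn
  obtain ⟨e⟩ : Nonempty ((Fin m → ℤˣ) ↪ Fin n) :=
    Function.Embedding.nonempty_of_card_le (by simpa using hn)
  let c (i : Fin n) : Fin m := Fin.ofNat m i
  let P : Matrix (Fin n) (Fin m → ℤˣ) ℝ := (1 : Matrix (Fin n) (Fin n) ℝ).submatrix id e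
  refine ⟨P * signMatrix p c, fun i => ?_, fun x hx hcard => ?_⟩
  · exact (lpNorm_one_submatrix_mulVec hp₀ e _).trans (lpNorm_col_signMatrix hp₀ c i)
  · let S : Finset (Fin m) := ({i | x i ≠ 0} : Finset (Fin n)).image c
    have hS : (#S : ℝ) ≤ 1 / 16 * p / ε ^ 2 := le_trans (by exact_mod_cast card_image_le) hcard
    have hSm : 8 * #S ≤ m := by
      have := Nat.le_floor hS
      omega
    rw [← mulVec_sub, ← mulVec_mulVec, lpNorm_one_submatrix_mulVec hp₀]
    exact lt_lpNorm_signMatrix_mulVec hp hε hε' c hS <| three_fourths_le_sum_sub_uniform hmn hSm hx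
      fun i hi => mem_image_of_mem c (by simpa using hi)

/-- **Tight `Ω(p/ε²)` lower bound for approximate Carathéodory**
(Theorem 4.1 / 4.9 of the paper): there is a constant `K > 0` such that for all `p ≥ 2`
and `0 < ε ≤ 1/2` and all sufficiently large `n`, some `n×n` matrix `V` with unit ℓ_p
norm columns and `u = V·𝟙/n` has the property that every point of the simplex with at
most `K·p/ε²` nonzero coordinates maps at ℓ_p distance greater than `ε` from `u`. -/
theorem cara_lower_bound :
    ∃ K : ℝ, 0 < K ∧
      ∀ (p : ℝ), 2 ≤ p → ∀ (ε : ℝ), 0 < ε → ε ≤ 1 / 2 →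
      ∃ n₀ : ℕ, ∀ n : ℕ, n₀ ≤ n →
      ∃ V : Matrix (Fin n) (Fin n) ℝ,
        (∀ i, lpNorm p (fun j => V j i) = 1) ∧
        ∀ x : Fin n → ℝ, (∀ i, 0 ≤ x i) → (∑ i, x i = 1) →
          (((Finset.univ.filter (fun i => x i ≠ 0)).card : ℝ) ≤ K * p / ε ^ 2) →
          ε < lpNorm p (fun i => V.mulVec x i - V.mulVec (fun _ => 1 / (n : ℝ)) i) := by
  refine ⟨1 / 16, by norm_num, fun p hp ε hε hε' => ?_⟩
  obtain ⟨n₀, h⟩ := cara_lower_bound_general hp hε hε'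
  exact ⟨n₀, fun n hn => (h n hn).imp fun V hV => ⟨hV.1, fun x _ => hV.2 x⟩⟩
end
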